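/- arXiv:2402.01990 — 2 statements merged into one kernel-verified Lean document; each statement's English description precedes it below -/
import Mathlib

section
/- Let λ ∈ ℝ and f : V → ℝ with λ·∫_V f dμ > 0, and let p be a nonnegative integer. Then there is no function u : V → ℝ solving Δu(x) = λ·e^{(2p+2)u(x)} + f(x) for all x ∈ V. -/
/-!
By symmetry of the weights the graph Laplacian has zero integral (`gint_glap_eq_zero`). Integrating
the equation therefore gives `lam * ∫ exp ((2p+2)u) + ∫ f = 0`; after multiplication by `lam` the
first term is nonnegative and the second is positive by hypothesis, a contradiction.
-/

open Real

/-- Graph Laplacian: `Δu(x) = (1/μ(x)) Σ_y w x y (u y − u x)`. -/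
noncomputable def glap {V : Type*} [Fintype V] (w : V → V → ℝ) (μ : V → ℝ)
    (u : V → ℝ) (x : V) : ℝ :=
  (1 / μ x) * ∑ y, w x y * (u y - u x)

/-- Integral over the graph: `∫_V g dμ = Σ_x μ(x) g(x)`. -/
noncomputable def gint {V : Type*} [Fintype V] (μ : V → ℝ) (g : V → ℝ) : ℝ :=
  ∑ x, μ x * g x

/-- Gradient norm squared: `|∇u|²(x) = (1/(2μ(x))) Σ_y w x y (u y − u x)²`. -/
noncomputable def gradsq {V : Type*} [Fintype V] (w : V → V → ℝ) (μ : V → ℝ)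
    (u : V → ℝ) (x : V) : ℝ :=
  (1 / (2 * μ x)) * ∑ y, w x y * (u y - u x) ^ 2

/-- The functional `J_λ(u) = (1/2)∫|∇u|² + (λ/(2p+2))∫(e^u−1)^{2p+2} + ∫ f u dμ`. -/
noncomputable def Jfun {V : Type*} [Fintype V] (w : V → V → ℝ) (μ : V → ℝ)
    (p : ℕ) (lam : ℝ) (f : V → ℝ) (u : V → ℝ) : ℝ :=
  (1 / 2) * gint μ (gradsq w μ u)
    + (lam / (2 * p + 2)) * gint μ (fun x => (Real.exp (u x) - 1) ^ (2 * p + 2))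
    + gint μ (fun x => f x * u x)

/-- Green's formula against the constant function `1`: for symmetric weights the graph Laplacian has
zero integral, since exchanging `x` and `y` negates the summand `w x y * (u y - u x)`. -/
theorem gint_glap_eq_zero {V : Type*} [Fintype V] (w : V → V → ℝ) (μ : V → ℝ)
    (hsymm : ∀ x y, w x y = w y x) (hμ : ∀ x, 0 < μ x) (u : V → ℝ) :
    gint μ (glap w μ u) = 0 := by
  have h1 : gint μ (glap w μ u) = ∑ x, ∑ y, w x y * (u y - u x) := by
    unfold gint glap
    refine Finset.sum_congr rfl fun x _ => ?_
    rw [← mul_assoc, mul_one_div_cancel (hμ x).ne', one_mul]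
  have h2 : ∑ x, ∑ y, w x y * (u y - u x) = -∑ x, ∑ y, w x y * (u y - u x) := by
    conv_lhs => rw [Finset.sum_comm]
    simp only [← Finset.sum_neg_distrib]
    refine Finset.sum_congr rfl fun x _ => Finset.sum_congr rfl fun y _ => ?_
    rw [hsymm y x]
    ring
  linarith

theorem stmt_8 {V : Type*} [Fintype V] [Nonempty V]
    (w : V → V → ℝ) (μ : V → ℝ)
    (hsymm : ∀ x y, w x y = w y x) (hnonneg : ∀ x y, 0 ≤ w x y)
    (hμ : ∀ x, 0 < μ x) (p : ℕ)
    (lam : ℝ) (f : V → ℝ) (hpos : 0 < lam * gint μ f) :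
    ¬ ∃ u : V → ℝ, ∀ x, glap w μ u x
        = lam * Real.exp ((2 * p + 2) * u x) + f x := by
  rintro ⟨u, hu⟩
  -- Integrating the equation and multiplying by `lam` gives
  -- `0 = lam ^ 2 * ∫ exp ((2 * p + 2) * u) + lam * ∫ f`, whose right-hand side is positive.
  have h0 := gint_glap_eq_zero w μ hsymm hμ u
  have hsplit : gint μ (glap w μ u)
      = lam * gint μ (fun x => Real.exp ((2 * p + 2) * u x)) + gint μ f := by
    unfold gint
    rw [Finset.mul_sum, ← Finset.sum_add_distrib]
    refine Finset.sum_congr rfl fun x _ => ?_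
    rw [hu x]
    ring
  have hexp : 0 ≤ gint μ (fun x => Real.exp ((2 * p + 2) * u x)) :=
    Finset.sum_nonneg fun x _ => mul_nonneg (hμ x).le (Real.exp_pos _).le
  rw [hsplit] at h0
  have hmul : lam ^ 2 * gint μ (fun x => Real.exp ((2 * p + 2) * u x)) + lam * gint μ f = 0 := by
    linear_combination lam * h0
  linarith [mul_nonneg (sq_nonneg lam) hexp]
end

section
/- Let f : V → ℝ with ∫_V f dμ < 0 and let p be a nonnegative integer. Then there exists a real number Λ_* < 0 such that the equation Δu(x) = λ·e^{u(x)}·(e^{u(x)} − 1)^{2p+1} + f(x) (for all x ∈ V) has at least two distinct solutions u : V → ℝ when λ < Λ_*, no solution when Λ_* < λ < 0, and at least one solution when λ = Λ_*. -/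
/-!
Put `c = −λ > 0` and `g(t) = e^t (e^t − 1)^{2p+1}`; the equation becomes `Δu + c g(u) = f`, whose
left side minus right side is the residual `res`.

*Solvable values of `c`.* If `u` solves the equation for `c` and `c' = c e^s` with `s > 0`, then
`u − s` is a strict supersolution for `c'`, because `e^{-t} g(t)` is strictly increasing
(`gnl_shift`). For large `c` the constant `−log 2` is a strict supersolution, and a strict
supersolution yields two solutions (`two_solutions`). So the solvable `c` form a nonempty up-set,
with two solutions at every `c` except possibly the least one. Since `g ≥ −1`, integrating the
equation bounds solvable `c` away from `0`. The least element exists (`exists_least`) by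
compactness: `g ≥ −1` bounds `Δu` above, hence the oscillation of `u` (`osc_bound`, a Harnack-type
bound), and then `∫ g(u) = ∫ f / c < 0` bounds `u` itself (`apriori`).

*Two solutions from a strict supersolution `v`.* Let `Φ(u) = u + η (Δu + c g(u) − f)` be an Euler
step of the gradient flow of `J`. Since `g' ≥ −1`, for small `η` the map `Φ` is order preserving
(`stepMap_monotone`) and `J` decreases by at least `η/2` times the squared norm of the residual
(`descent`). Hence an orbit along which `J` is bounded below accumulates at a solution
(`orbit_cluster`), the a priori bound supplying compactness. The orbit of `v` itself gives a solution
below `v`. For the other one, follow the orbits of `v + t`, `t ≥ 0`. The `t` whose orbit eventually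
drops below `v` form a bounded relatively open set containing `0`; let `τ` be its supremum. For
`0 ≤ t < τ` the orbit ends up in the box between a low subsolution (`exists_sub`) and `v`, so `J` is
bounded below along it by a constant independent of `t`; by continuity the same holds at `t = τ`.
The limit point of the orbit of `v + τ` is a solution which is not `≤ v`, since otherwise it would be
`< v` everywhere and the orbit would drop below `v`.
-/

open Real

/-! ### The nonlinearity and the Euler scheme -/

/-- The nonlinearity `g(t) = e^t (e^t − 1)^{2p+1}`. -/
noncomputable def gnl (p : ℕ) (t : ℝ) : ℝ := Real.exp t * (Real.exp t - 1) ^ (2 * p + 1)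

/-- The residual `Δu + c g(u) − f`, written with `c = −λ`: the equation says that it vanishes, and
it is minus the gradient of `J_{−c}` in `L²(μ)`. Negative residual means strict supersolution. -/
noncomputable def res {V : Type*} [Fintype V] (w : V → V → ℝ) (μ : V → ℝ) (p : ℕ) (f : V → ℝ)
    (c : ℝ) (u : V → ℝ) (x : V) : ℝ :=
  glap w μ u x + c * gnl p (u x) - f x

/-- One explicit Euler step of size `η` for the gradient flow of `J_{−c}`. -/
noncomputable def stepMap {V : Type*} [Fintype V] (w : V → V → ℝ) (μ : V → ℝ) (p : ℕ) (f : V → ℝ)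
    (c η : ℝ) (u : V → ℝ) (x : V) : ℝ :=
  u x + η * res w μ p f c u x

theorem gnl_ge_neg_exp (p : ℕ) (t : ℝ) : -Real.exp t ≤ gnl p t := by
  have h0 := Real.exp_pos t
  have h1 : (-1 : ℝ) ≤ (Real.exp t - 1) ^ (2 * p + 1) := by
    have h := (Odd.strictMono_pow (R := ℝ) ⟨p, rfl⟩ : StrictMono fun a : ℝ => a ^ (2 * p + 1)).monotone
      (show (-1 : ℝ) ≤ Real.exp t - 1 by linarith)
    have h2 : (-1 : ℝ) ^ (2 * p + 1) = -1 := Odd.neg_one_pow ⟨p, rfl⟩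
    simpa [h2] using h
  unfold gnl
  nlinarith

theorem gnl_nonneg (p : ℕ) {t : ℝ} (ht : 0 ≤ t) : 0 ≤ gnl p t := by
  have h1 : 0 ≤ Real.exp t - 1 := by linarith [Real.one_le_exp ht]
  unfold gnl
  positivity

theorem gnl_ge_neg_one (p : ℕ) (t : ℝ) : -1 ≤ gnl p t := by
  rcases le_total 0 t with h | h
  · linarith [gnl_nonneg p h]
  · have := Real.exp_le_one_iff.2 h
    linarith [gnl_ge_neg_exp p t]

theorem gnl_ge_self (p : ℕ) {t : ℝ} (ht : 1 ≤ t) : t ≤ gnl p t := by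
  have h1 : t + 1 ≤ Real.exp t := Real.add_one_le_exp t
  have h2 : 1 ≤ (Real.exp t - 1) ^ (2 * p + 1) := one_le_pow₀ (by linarith)
  unfold gnl
  nlinarith [Real.exp_pos t]

/-- Translation estimate: `e^{-t} g(t)` is strictly increasing. -/
theorem gnl_shift (p : ℕ) (t : ℝ) {s : ℝ} (hs : 0 < s) :
    Real.exp s * gnl p (t - s) < gnl p t := by
  have h : (Real.exp (t - s) - 1) ^ (2 * p + 1) < (Real.exp t - 1) ^ (2 * p + 1) :=
    (Odd.strictMono_pow (R := ℝ) ⟨p, rfl⟩)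
      (sub_lt_sub_right (Real.exp_lt_exp.2 (by linarith : t - s < t)) 1)
  have e : Real.exp s * Real.exp (t - s) = Real.exp t := by
    rw [← Real.exp_add]; congr 1; ring
  unfold gnl
  rw [← mul_assoc, e]
  exact mul_lt_mul_of_pos_left h (Real.exp_pos t)

theorem gnl_hasDerivAt (p : ℕ) (t : ℝ) :
    HasDerivAt (gnl p)
      (Real.exp t * (Real.exp t - 1) ^ (2 * p) * ((2 * p + 2) * Real.exp t - 1)) t := by
  have h1 := (Real.hasDerivAt_exp t).mul (((Real.hasDerivAt_exp t).sub_const 1).pow (2 * p + 1))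
  refine h1.congr_deriv ?_
  simp only [Nat.add_sub_cancel, Pi.pow_apply]
  push_cast
  ring

/-- The bound `g' ≥ −1`, the only regularity of `g` used by the Euler scheme: it makes the scheme
order preserving and energy decreasing although `g` grows exponentially. -/
theorem gnl_add_id_monotone (p : ℕ) : Monotone (fun t => gnl p t + t) := by
  have hd : ∀ t, HasDerivAt (fun t => gnl p t + t) _ t :=
    fun t => (gnl_hasDerivAt p t).add (hasDerivAt_id t)
  refine monotone_of_deriv_nonneg (fun t => (hd t).differentiableAt) fun t => ?_
  rw [(hd t).deriv]
  have h0 := Real.exp_pos t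
  set s := Real.exp t with hs
  have hq : 0 ≤ (s - 1) ^ (2 * p) := by rw [pow_mul]; positivity
  have hp : (0 : ℝ) ≤ p := Nat.cast_nonneg p
  rcases le_total 1 s with h | h
  · have : 0 ≤ (2 * p + 2) * s - 1 := by nlinarith
    positivity
  · have h1 : (s - 1) ^ (2 * p) ≤ 1 := by
      rw [pow_mul]; exact pow_le_one₀ (by positivity) (by nlinarith)
    have h2 : s * (s - 1) ^ (2 * p) ≤ 1 := by nlinarith
    have h3 : 0 ≤ s * (s - 1) ^ (2 * p) := by positivity
    have h4 : 0 ≤ s * (s - 1) ^ (2 * p) * ((2 * p + 2) * s) := by positivity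
    nlinarith

/-- Second order lower bound for the primitive `(e^t − 1)^{2p+2}/(2p+2)` of `g`, from `g' ≥ −1`. -/
theorem primitive_ge (p : ℕ) (a h : ℝ) :
    (Real.exp a - 1) ^ (2 * p + 2) / (2 * p + 2) + gnl p a * h - h ^ 2 / 2
      ≤ (Real.exp (a + h) - 1) ^ (2 * p + 2) / (2 * p + 2) := by
  have hp : (2 * (p : ℝ) + 2) ≠ 0 := by positivity
  let H : ℝ → ℝ := fun t => (Real.exp t - 1) ^ (2 * p + 2) / (2 * p + 2) + t ^ 2 / 2
  have hH : ∀ t, HasDerivAt H (gnl p t + t) t := by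
    intro t
    have h1 := ((((Real.hasDerivAt_exp t).sub_const 1).pow (2 * p + 2)).div_const
      (2 * (p : ℝ) + 2)).add (((hasDerivAt_id t).pow 2).div_const 2)
    refine h1.congr_deriv ?_
    simp only [gnl, id]
    push_cast
    field_simp
  have hd : deriv H = fun t => gnl p t + t := funext fun t => (hH t).deriv
  have hconv : ConvexOn ℝ Set.univ H :=
    Monotone.convexOn_univ_of_deriv (fun t => (hH t).differentiableAt)
      (by rw [hd]; exact gnl_add_id_monotone p)
  have key : H a + (gnl p a + a) * h ≤ H (a + h) := by
    rcases lt_trichotomy h 0 with h0 | h0 | h0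
    · have := hconv.slope_le_of_hasDerivAt (Set.mem_univ (a + h)) (Set.mem_univ a) (by linarith)
        (hH a)
      rw [slope_def_field, div_le_iff₀ (by linarith)] at this
      nlinarith
    · simp [h0]
    · have := hconv.le_slope_of_hasDerivAt (Set.mem_univ a) (Set.mem_univ (a + h)) (by linarith)
        (hH a)
      rw [slope_def_field, le_div_iff₀ (by linarith)] at this
      nlinarith
  simp only [H] at key
  nlinarith

/-! ### Laplacian, energy and the Euler step -/

section Graph

variable {V : Type*} [Fintype V] {w : V → V → ℝ} {μ : V → ℝ}

theorem mu_mul_glap (hμ : ∀ x, 0 < μ x) (u : V → ℝ) (x : V) :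
    μ x * glap w μ u x = ∑ y, w x y * (u y - u x) := by
  have := (hμ x).ne'
  unfold glap
  field_simp

theorem gint_glap (hsymm : ∀ x y, w x y = w y x) (hμ : ∀ x, 0 < μ x) (u : V → ℝ) :
    gint μ (glap w μ u) = 0 := by
  unfold gint
  simp_rw [mu_mul_glap hμ]
  have h : ∑ x, ∑ y, w x y * (u y - u x) = -∑ x, ∑ y, w x y * (u y - u x) := by
    conv_lhs => rw [Finset.sum_comm]
    rw [← Finset.sum_neg_distrib]
    refine Finset.sum_congr rfl fun x _ => ?_
    rw [← Finset.sum_neg_distrib]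
    refine Finset.sum_congr rfl fun y _ => ?_
    rw [hsymm y x]; ring
  linarith

theorem glap_add_const (u : V → ℝ) (s : ℝ) (x : V) :
    glap w μ (fun y => u y + s) x = glap w μ u x := by
  simp [glap]

theorem gint_gradsq (hμ : ∀ x, 0 < μ x) (u : V → ℝ) :
    gint μ (gradsq w μ u) = (1 / 2) * ∑ x, ∑ y, w x y * (u y - u x) ^ 2 := by
  unfold gint gradsq
  rw [Finset.mul_sum]
  refine Finset.sum_congr rfl fun x _ => ?_
  have := (hμ x).ne'
  field_simp

/-- Green's formula in the form needed to expand the Dirichlet energy. -/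
theorem green (hsymm : ∀ x y, w x y = w y x) (hμ : ∀ x, 0 < μ x) (u h : V → ℝ) :
    ∑ x, ∑ y, w x y * ((u y - u x) * (h y - h x)) = -2 * ∑ x, μ x * (h x * glap w μ u x) := by
  have e1 : ∑ x, ∑ y, w x y * ((u y - u x) * h y) = -∑ x, ∑ y, w x y * ((u y - u x) * h x) := by
    rw [Finset.sum_comm, ← Finset.sum_neg_distrib]
    refine Finset.sum_congr rfl fun x _ => ?_
    rw [← Finset.sum_neg_distrib]
    refine Finset.sum_congr rfl fun y _ => ?_
    rw [hsymm y x]; ring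
  have e2 : ∑ x, ∑ y, w x y * ((u y - u x) * h x) = ∑ x, μ x * (h x * glap w μ u x) := by
    refine Finset.sum_congr rfl fun x _ => ?_
    rw [mul_left_comm, mu_mul_glap hμ, Finset.mul_sum]
    exact Finset.sum_congr rfl fun y _ => by ring
  have e3 : ∑ x, ∑ y, w x y * ((u y - u x) * (h y - h x))
      = ∑ x, ∑ y, w x y * ((u y - u x) * h y) - ∑ x, ∑ y, w x y * ((u y - u x) * h x) := by
    simp_rw [← Finset.sum_sub_distrib]
    exact Finset.sum_congr rfl fun x _ => Finset.sum_congr rfl fun y _ => by ring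
  rw [e3, e1, e2]; ring

theorem dirichlet_le (hsymm : ∀ x y, w x y = w y x) (hnonneg : ∀ x y, 0 ≤ w x y) (h : V → ℝ) :
    ∑ x, ∑ y, w x y * (h y - h x) ^ 2 ≤ 4 * ∑ x, (∑ y, w x y) * h x ^ 2 := by
  have e1 : ∑ x, ∑ y, w x y * h y ^ 2 = ∑ x, ∑ y, w x y * h x ^ 2 := by
    rw [Finset.sum_comm]
    exact Finset.sum_congr rfl fun x _ => Finset.sum_congr rfl fun y _ => by rw [hsymm y x]
  have e2 : ∑ x, (∑ y, w x y) * h x ^ 2 = ∑ x, ∑ y, w x y * h x ^ 2 := by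
    simp_rw [Finset.sum_mul]
  have e3 : ∑ x, ∑ y, w x y * (h y - h x) ^ 2
      ≤ ∑ x, ∑ y, (2 * (w x y * h y ^ 2) + 2 * (w x y * h x ^ 2)) := by
    refine Finset.sum_le_sum fun x _ => Finset.sum_le_sum fun y _ => ?_
    nlinarith [mul_nonneg (hnonneg x y) (sq_nonneg (h y + h x))]
  simp_rw [Finset.sum_add_distrib, ← Finset.mul_sum] at e3
  rw [e1] at e3
  rw [e2]; linarith

/-- One Euler step decreases the energy by a fixed multiple of the squared residual. -/
theorem descent (hsymm : ∀ x y, w x y = w y x) (hnonneg : ∀ x y, 0 ≤ w x y)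
    (hμ : ∀ x, 0 < μ x) (p : ℕ) (f : V → ℝ) {c η : ℝ} (hc : 0 < c) (hη : 0 < η)
    (hst : ∀ x, η * ((∑ y, w x y) / μ x + c) ≤ 1 / 2) (u : V → ℝ) :
    Jfun w μ p (-c) f (stepMap w μ p f c η u)
      ≤ Jfun w μ p (-c) f u - η / 2 * ∑ x, μ x * res w μ p f c u x ^ 2 := by
  set r : V → ℝ := res w μ p f c u with hr
  set h : V → ℝ := fun x => η * r x with hh
  have hstep : stepMap w μ p f c η u = fun x => u x + h x := rfl
  rw [hstep]
  unfold Jfun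
  rw [gint_gradsq hμ, gint_gradsq hμ]
  have q : ∑ x, ∑ y, w x y * ((u y + h y) - (u x + h x)) ^ 2
      = ∑ x, ∑ y, w x y * (u y - u x) ^ 2 + 2 * ∑ x, ∑ y, w x y * ((u y - u x) * (h y - h x))
        + ∑ x, ∑ y, w x y * (h y - h x) ^ 2 := by
    simp_rw [Finset.mul_sum, ← Finset.sum_add_distrib]
    exact Finset.sum_congr rfl fun x _ => Finset.sum_congr rfl fun y _ => by ring
  rw [q, green hsymm hμ]
  have hD := dirichlet_le hsymm hnonneg h
  unfold gint
  have key : ∑ x, (μ x * (-(c * ((Real.exp (u x + h x) - 1) ^ (2 * p + 2) / (2 * p + 2))))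
        + μ x * (f x * (u x + h x)) - μ x * (h x * glap w μ u x) + (∑ y, w x y) * h x ^ 2)
      ≤ ∑ x, (μ x * (-(c * ((Real.exp (u x) - 1) ^ (2 * p + 2) / (2 * p + 2))))
        + μ x * (f x * u x) - η / 2 * (μ x * r x ^ 2)) := by
    refine Finset.sum_le_sum fun x _ => ?_
    have h1 := mul_le_mul_of_nonneg_left (primitive_ge p (u x) (h x)) (mul_pos (hμ x) hc).le
    have h2 : r x = glap w μ u x + c * gnl p (u x) - f x := rfl
    have h3 : (∑ y, w x y) * h x ^ 2 + μ x * c * (h x ^ 2) ≤ η / 2 * (μ x * r x ^ 2) := by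
      have e : (∑ y, w x y) = μ x * ((∑ y, w x y) / μ x) := by
        have := (hμ x).ne'
        field_simp
      have h4 : (∑ y, w x y) * h x ^ 2 + μ x * c * (h x ^ 2)
          = (η * ((∑ y, w x y) / μ x + c)) * (η * (μ x * r x ^ 2)) := by
        conv_lhs => rw [e]
        simp only [hh]; ring
      rw [h4]
      have h5 : 0 ≤ η * (μ x * r x ^ 2) := by have := hμ x; positivity
      nlinarith [mul_le_mul_of_nonneg_right (hst x) h5]
    have h6 : μ x * (h x * glap w μ u x) + μ x * c * (gnl p (u x) * h x) - μ x * (f x * h x)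
        = η * (μ x * r x ^ 2) := by
      simp only [hh]; rw [h2]; ring
    have h7 : 0 ≤ μ x * c * h x ^ 2 := by have := hμ x; positivity
    nlinarith
  have sc : ∀ v : V → ℝ, (-c / (2 * (p : ℝ) + 2)) * ∑ x, μ x * (Real.exp (v x) - 1) ^ (2 * p + 2)
      = ∑ x, μ x * (-(c * ((Real.exp (v x) - 1) ^ (2 * p + 2) / (2 * p + 2)))) := by
    intro v
    rw [Finset.mul_sum]
    exact Finset.sum_congr rfl fun x _ => by ring
  have sc1 := sc u
  have sc2 := sc (fun x => u x + h x)
  simp only [Finset.sum_add_distrib, Finset.sum_sub_distrib, ← Finset.mul_sum] at key sc1 sc2 ⊢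
  linarith

theorem res_continuous (p : ℕ) (f : V → ℝ) :
    Continuous (fun q : ℝ × (V → ℝ) => res w μ p f q.1 q.2) := by
  unfold res glap gnl; fun_prop

theorem res_continuous_right (p : ℕ) (f : V → ℝ) (c : ℝ) : Continuous (res w μ p f c) := by
  unfold res glap gnl; fun_prop

theorem stepMap_continuous (p : ℕ) (f : V → ℝ) (c η : ℝ) :
    Continuous (stepMap w μ p f c η) := by
  unfold stepMap res glap gnl; fun_prop

theorem Jfun_continuous (p : ℕ) (f : V → ℝ) (c : ℝ) : Continuous (Jfun w μ p c f) := by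
  unfold Jfun gint gradsq; fun_prop

theorem stepMap_monotone (hnonneg : ∀ x y, 0 ≤ w x y)
    (p : ℕ) (f : V → ℝ) {c η : ℝ} (hμ : ∀ x, 0 < μ x) (hc : 0 < c) (hη : 0 < η)
    (hst : ∀ x, η * ((∑ y, w x y) / μ x + c) ≤ 1 / 2) : Monotone (stepMap w μ p f c η) := by
  intro u v huv x
  have e : ∀ u : V → ℝ, stepMap w μ p f c η u x
      = (1 - η * ((∑ y, w x y) / μ x + c)) * u x + η * (1 / μ x) * ∑ y, w x y * u y
        + η * c * (gnl p (u x) + u x) - η * f x := by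
    intro u
    have : glap w μ u x = (1 / μ x) * ∑ y, w x y * u y - ((∑ y, w x y) / μ x) * u x := by
      unfold glap
      simp_rw [mul_sub, Finset.sum_sub_distrib, ← Finset.sum_mul]
      ring
    unfold stepMap res
    rw [this]; ring
  rw [e, e]
  have h1 : (1 - η * ((∑ y, w x y) / μ x + c)) * u x ≤ (1 - η * ((∑ y, w x y) / μ x + c)) * v x :=
    mul_le_mul_of_nonneg_left (huv x) (by linarith [hst x])
  have h2 : η * (1 / μ x) * ∑ y, w x y * u y ≤ η * (1 / μ x) * ∑ y, w x y * v y := by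
    refine mul_le_mul_of_nonneg_left ?_ (by have := hμ x; positivity)
    exact Finset.sum_le_sum fun y _ => mul_le_mul_of_nonneg_left (huv y) (hnonneg x y)
  have h3 : η * c * (gnl p (u x) + u x) ≤ η * c * (gnl p (v x) + v x) :=
    mul_le_mul_of_nonneg_left (gnl_add_id_monotone p (huv x)) (by positivity)
  linarith

/-! ### A priori bounds and subsolutions -/

/-- Harnack-type bound: an upper bound on `Δu` controls the oscillation of `u`, because the bound
spreads from a minimum point of `u` along the edges of the connected graph. -/
theorem osc_bound [Nonempty V] (hnonneg : ∀ x y, 0 ≤ w x y) (hsymm : ∀ x y, w x y = w y x)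
    (hμ : ∀ x, 0 < μ x)
    (hconn : (SimpleGraph.fromRel (fun x y => 0 < w x y)).Connected) :
    ∃ C : ℝ, 0 ≤ C ∧ ∀ (u : V → ℝ) (K : ℝ), 0 ≤ K → (∀ x, glap w μ u x ≤ K) →
      ∀ x y, u x - u y ≤ C * K := by
  have main : ∀ x0 y, ∃ C : ℝ, 0 ≤ C ∧ ∀ (u : V → ℝ) (K : ℝ), 0 ≤ K → (∀ x, glap w μ u x ≤ K) →
      (∀ z, u x0 ≤ u z) → u y - u x0 ≤ C * K := by
    intro x0 y
    have hr := hconn.preconnected x0 y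
    rw [SimpleGraph.reachable_iff_reflTransGen] at hr
    induction hr with
    | refl => exact ⟨0, le_rfl, fun u K _ _ _ => by simp⟩
    | @tail b d _ hbd ih =>
      obtain ⟨C, hC, h⟩ := ih
      have hw : 0 < w b d := by
        rw [SimpleGraph.fromRel_adj] at hbd
        rcases hbd.2 with h | h
        · exact h
        · rwa [hsymm]
      have hdeg : 0 ≤ ∑ z, w b z := Finset.sum_nonneg fun z _ => hnonneg b z
      have hμb := hμ b
      refine ⟨(μ b + (∑ z, w b z) * C) / w b d, by positivity, fun u K hK hu hmin => ?_⟩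
      have h1 := h u K hK hu hmin
      have h2 : ∑ z, w b z * (u z - u x0) ≤ μ b * K + (∑ z, w b z) * (u b - u x0) := by
        have e : ∑ z, w b z * (u z - u x0)
            = μ b * glap w μ u b + (∑ z, w b z) * (u b - u x0) := by
          rw [mu_mul_glap hμ, Finset.sum_mul, ← Finset.sum_add_distrib]
          exact Finset.sum_congr rfl fun z _ => by ring
        rw [e]
        linarith [mul_le_mul_of_nonneg_left (hu b) hμb.le]
      have h3 : w b d * (u d - u x0) ≤ ∑ z, w b z * (u z - u x0) :=
        Finset.single_le_sum (f := fun z => w b z * (u z - u x0))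
          (fun z _ => mul_nonneg (hnonneg b z) (by linarith [hmin z])) (Finset.mem_univ d)
      have h4 := mul_le_mul_of_nonneg_left h1 hdeg
      rw [div_mul_eq_mul_div, le_div_iff₀ hw]
      nlinarith
  choose C hC h using main
  refine ⟨∑ x, ∑ y, C x y, Finset.sum_nonneg fun x _ => Finset.sum_nonneg fun y _ => hC x y, ?_⟩
  intro u K hK hu x y
  obtain ⟨x0, hx0⟩ := Finite.exists_min u
  have h1 := h x0 x u K hK hu hx0
  have h2 : C x0 x ≤ ∑ x, ∑ y, C x y :=
    (Finset.single_le_sum (f := fun z => C x0 z) (fun z _ => hC x0 z) (Finset.mem_univ x)).trans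
      (Finset.single_le_sum (f := fun a => ∑ z, C a z)
        (fun a _ => Finset.sum_nonneg fun z _ => hC a z) (Finset.mem_univ x0))
  linarith [hx0 y, mul_le_mul_of_nonneg_right h2 hK]

theorem vol_pos [Nonempty V] (hμ : ∀ x, 0 < μ x) : 0 < ∑ x, μ x :=
  Finset.sum_pos (fun x _ => hμ x) Finset.univ_nonempty

/-- Solvability of the Poisson equation up to a constant. The operator `u ↦ Δu − ∫u` is injective,
hence surjective; integrating the equation identifies the sign of the constant. -/
theorem poisson [Nonempty V] (hnonneg : ∀ x y, 0 ≤ w x y) (hsymm : ∀ x y, w x y = w y x)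
    (hμ : ∀ x, 0 < μ x)
    (hconn : (SimpleGraph.fromRel (fun x y => 0 < w x y)).Connected)
    (f : V → ℝ) (hf : gint μ f < 0) :
    ∃ (φ : V → ℝ) (k : ℝ), 0 < k ∧ ∀ x, glap w μ φ x = f x + k := by
  let T : (V → ℝ) →ₗ[ℝ] (V → ℝ) :=
    { toFun := fun u x => glap w μ u x - gint μ u
      map_add' := by
        intro u v; funext x
        have h1 : glap w μ (u + v) x = glap w μ u x + glap w μ v x := by
          simp only [glap, Pi.add_apply, ← mul_add, ← Finset.sum_add_distrib]
          congr 1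
          exact Finset.sum_congr rfl fun y _ => by ring
        have h2 : gint μ (u + v) = gint μ u + gint μ v := by
          simp only [gint, Pi.add_apply, mul_add, Finset.sum_add_distrib]
        simp only [Pi.add_apply, h1, h2]; ring
      map_smul' := by
        intro a u; funext x
        have h1 : glap w μ (a • u) x = a * glap w μ u x := by
          simp only [glap, Pi.smul_apply, smul_eq_mul, Finset.mul_sum]
          exact Finset.sum_congr rfl fun y _ => by ring
        have h2 : gint μ (a • u) = a * gint μ u := by
          simp only [gint, Pi.smul_apply, smul_eq_mul, Finset.mul_sum]
          exact Finset.sum_congr rfl fun y _ => by ring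
        simp only [Pi.smul_apply, smul_eq_mul, RingHom.id_apply, h1, h2]; ring }
  have hT : ∀ u x, T u x = glap w μ u x - gint μ u := fun _ _ => rfl
  have hvol := vol_pos hμ
  have hint : ∀ u h : V → ℝ, T u = h → gint μ h = -(gint μ u * ∑ x, μ x) := by
    intro u h hu
    have e : gint μ h = gint μ (glap w μ u) - gint μ u * ∑ x, μ x := by
      rw [← hu]
      change ∑ x, μ x * (glap w μ u x - gint μ u) = ∑ x, μ x * glap w μ u x - gint μ u * ∑ x, μ x
      rw [Finset.mul_sum, ← Finset.sum_sub_distrib]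
      exact Finset.sum_congr rfl fun y _ => by ring
    rw [e, gint_glap hsymm hμ]; ring
  have hinj : Function.Injective T := by
    rw [← LinearMap.ker_eq_bot, LinearMap.ker_eq_bot']
    intro u hu
    have h0 : gint μ u = 0 := by
      have h1 := hint u 0 hu
      have h2 : gint μ (0 : V → ℝ) = 0 := by simp [gint]
      rw [h2] at h1
      rcases mul_eq_zero.1 (neg_eq_zero.1 h1.symm) with h | h
      · exact h
      · exact absurd h hvol.ne'
    have hl : ∀ x, glap w μ u x ≤ 0 := by
      intro x
      have := congrFun hu x
      rw [hT, h0] at this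
      simpa using this.le
    obtain ⟨C, _, h⟩ := osc_bound hnonneg hsymm hμ hconn
    have hle := h u 0 le_rfl hl
    simp only [mul_zero] at hle
    funext x
    have hc : ∀ y, u y = u x := fun y => le_antisymm (by linarith [hle y x]) (by linarith [hle x y])
    have h3 : gint μ u = (∑ y, μ y) * u x := by
      unfold gint; rw [Finset.sum_mul]; exact Finset.sum_congr rfl fun y _ => by rw [hc y]
    rw [h0] at h3
    rcases mul_eq_zero.1 h3.symm with h | h
    · exact absurd h hvol.ne'
    · simpa using h
  obtain ⟨φ, hφ⟩ := LinearMap.injective_iff_surjective.1 hinj f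
  refine ⟨φ, gint μ φ, ?_, fun x => ?_⟩
  · have := hint φ f hφ
    by_contra hneg
    nlinarith
  · have := congrFun hφ x
    rw [hT] at this
    linarith

/-- Integrating `res u ≤ ε` over `V`: at a minimum point of `g(u)`, `c g(u)` is at most the mean of
`f` plus `ε`, hence negative by a definite amount when `ε` is small. -/
theorem exists_gnl_le [Nonempty V] (hsymm : ∀ x y, w x y = w y x) (hμ : ∀ x, 0 < μ x)
    (p : ℕ) (f : V → ℝ) {c ε : ℝ} (hc : 0 < c) (u : V → ℝ)
    (hu : ∀ x, res w μ p f c u x ≤ ε) :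
    ∃ x, c * gnl p (u x) * ∑ y, μ y ≤ gint μ f + ε * ∑ y, μ y := by
  by_contra! hcon
  have hvol := vol_pos hμ
  obtain ⟨x0, hx0⟩ := Finite.exists_min (fun x => gnl p (u x))
  have h1 := hcon x0
  have h2 : ∑ x, μ x * res w μ p f c u x ≤ ∑ x, μ x * ε :=
    Finset.sum_le_sum fun x _ => mul_le_mul_of_nonneg_left (hu x) (hμ x).le
  have h3 : ∑ x, μ x * res w μ p f c u x
      = gint μ (glap w μ u) + ∑ x, μ x * (c * gnl p (u x)) - gint μ f := by
    unfold gint res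
    rw [← Finset.sum_add_distrib, ← Finset.sum_sub_distrib]
    exact Finset.sum_congr rfl fun x _ => by ring
  have h4 : ∑ x, μ x * (c * gnl p (u x0)) ≤ ∑ x, μ x * (c * gnl p (u x)) :=
    Finset.sum_le_sum fun x _ =>
      mul_le_mul_of_nonneg_left (mul_le_mul_of_nonneg_left (hx0 x) hc.le) (hμ x).le
  rw [gint_glap hsymm hμ] at h3
  rw [← Finset.sum_mul] at h2 h4
  linarith

/-- A priori bound for approximate solutions, uniform for `c` in a compact subset of `(0, ∞)`. It
also serves as a Palais–Smale condition. -/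
theorem apriori [Nonempty V] (hnonneg : ∀ x y, 0 ≤ w x y) (hsymm : ∀ x y, w x y = w y x)
    (hμ : ∀ x, 0 < μ x)
    (hconn : (SimpleGraph.fromRel (fun x y => 0 < w x y)).Connected)
    (p : ℕ) (f : V → ℝ) (hf : gint μ f < 0) :
    ∃ ε : ℝ, 0 < ε ∧ ∀ c1 : ℝ, ∃ R : ℝ, ∀ c : ℝ, 0 < c → c ≤ c1 → ∀ u : V → ℝ,
      (∀ x, |res w μ p f c u x| ≤ ε) → ∀ x, |u x| ≤ R := by
  have hvol := vol_pos hμ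
  set vol := ∑ x, μ x with hvoldef
  obtain ⟨C, hC, hosc⟩ := osc_bound hnonneg hsymm hμ hconn
  set m := -gint μ f with hm
  have hmpos : 0 < m := by linarith
  refine ⟨m / (2 * vol), by positivity, fun c1 => ?_⟩
  obtain ⟨F, hF⟩ := (Set.finite_range fun x => |f x|).bddAbove
  have hF' : ∀ x, |f x| ≤ F := fun x => hF ⟨x, rfl⟩
  set K := c1 + F + m / (2 * vol) with hK
  refine ⟨|Real.log (m / (2 * vol * c1))| + C * K, fun c hc hcc u hu x => ?_⟩
  have hc1 : 0 < c1 := hc.trans_le hcc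
  have hF0 : 0 ≤ F := (abs_nonneg _).trans (hF' x)
  have hKpos : 0 ≤ K := by positivity
  have hl : ∀ x, glap w μ u x ≤ K := by
    intro x
    have h1 := (abs_le.1 (hu x)).2
    have h2 := (abs_le.1 (hF' x)).2
    have h3 := mul_le_mul_of_nonneg_left (gnl_ge_neg_one p (u x)) hc.le
    unfold res at h1
    linarith
  obtain ⟨y, hy⟩ := exists_gnl_le hsymm hμ p f hc u (fun x => (abs_le.1 (hu x)).2)
  rw [← hvoldef] at hy
  have hy1 : c * gnl p (u y) * vol ≤ -(m / 2) := by
    have : m / (2 * vol) * vol = m / 2 := by field_simp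
    linarith
  have hneg : u y < 0 := by
    by_contra! h
    have := gnl_nonneg p h
    have : 0 ≤ c * gnl p (u y) * vol := by positivity
    linarith
  have hlow : Real.log (m / (2 * vol * c1)) ≤ u y := by
    rw [Real.log_le_iff_le_exp (by positivity), div_le_iff₀ (by positivity)]
    have h1 := mul_le_mul_of_nonneg_right
      (mul_le_mul_of_nonneg_left (gnl_ge_neg_exp p (u y)) hc.le) hvol.le
    have h2 : c * Real.exp (u y) * vol ≤ c1 * Real.exp (u y) * vol := by gcongr
    nlinarith
  have h1 := hosc u K hKpos hl x y
  have h2 := hosc u K hKpos hl y x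
  rw [abs_le]
  have h3 := neg_abs_le (Real.log (m / (2 * vol * c1)))
  have h4 := abs_nonneg (Real.log (m / (2 * vol * c1)))
  constructor <;> linarith

/-- Arbitrarily low subsolutions exist for every `c > 0`. -/
theorem exists_sub [Nonempty V] (hnonneg : ∀ x y, 0 ≤ w x y) (hsymm : ∀ x y, w x y = w y x)
    (hμ : ∀ x, 0 < μ x)
    (hconn : (SimpleGraph.fromRel (fun x y => 0 < w x y)).Connected)
    (p : ℕ) (f : V → ℝ) (hf : gint μ f < 0) {c : ℝ} (hc : 0 < c) (v : V → ℝ) :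
    ∃ ψ : V → ℝ, ψ ≤ v ∧ ∀ x, 0 ≤ res w μ p f c ψ x := by
  obtain ⟨φ, k, hk, hφ⟩ := poisson hnonneg hsymm hμ hconn f hf
  obtain ⟨s, hs⟩ := (Set.finite_range fun x => max (φ x - v x) (φ x - Real.log (k / c))).bddAbove
  have hs' : ∀ x, max (φ x - v x) (φ x - Real.log (k / c)) ≤ s := fun x => hs ⟨x, rfl⟩
  refine ⟨fun x => φ x + -s, fun x => ?_, fun x => ?_⟩
  · have := (le_max_left _ _).trans (hs' x)
    show φ x + -s ≤ v x
    linarith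
  · have h1 := (le_max_right _ _).trans (hs' x)
    have h2 : Real.exp (φ x + -s) ≤ k / c := by
      rw [← Real.le_log_iff_exp_le (by positivity)]; linarith
    rw [le_div_iff₀ hc] at h2
    have h3 := mul_le_mul_of_nonneg_left (gnl_ge_neg_exp p (φ x + -s)) hc.le
    unfold res
    rw [glap_add_const, hφ]
    linarith

/-! ### Existence of solutions -/

/-- If the energy stays bounded below along an Euler orbit, the residuals along the orbit tend to
zero, and by the a priori bound the orbit accumulates at a solution. -/
theorem orbit_cluster [Nonempty V] (hnonneg : ∀ x y, 0 ≤ w x y) (hsymm : ∀ x y, w x y = w y x)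
    (hμ : ∀ x, 0 < μ x)
    (hconn : (SimpleGraph.fromRel (fun x y => 0 < w x y)).Connected)
    (p : ℕ) (f : V → ℝ) (hf : gint μ f < 0) {c η : ℝ} (hc : 0 < c) (hη : 0 < η)
    (hst : ∀ x, η * ((∑ y, w x y) / μ x + c) ≤ 1 / 2) (u : V → ℝ) (b : ℝ)
    (hb : ∀ n, b ≤ Jfun w μ p (-c) f ((stepMap w μ p f c η)^[n] u)) :
    ∃ (z : V → ℝ) (k : ℕ → ℕ), StrictMono k ∧ (∀ x, res w μ p f c z x = 0) ∧
      Filter.Tendsto (fun n => (stepMap w μ p f c η)^[k n] u) Filter.atTop (nhds z) := by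
  set Φ := stepMap w μ p f c η with hΦ
  set a : ℕ → ℝ := fun n => Jfun w μ p (-c) f (Φ^[n] u) with ha
  set S : ℕ → ℝ := fun n => ∑ x, μ x * res w μ p f c (Φ^[n] u) x ^ 2 with hS
  have hstep : ∀ n, a (n + 1) ≤ a n - η / 2 * S n := by
    intro n
    simp only [ha, hS, Function.iterate_succ_apply']
    exact descent hsymm hnonneg hμ p f hc hη hst _
  have hS0 : ∀ n, 0 ≤ S n := fun n =>
    Finset.sum_nonneg fun x _ => mul_nonneg (hμ x).le (sq_nonneg _)
  have hanti : Antitone a := antitone_nat_of_succ_le fun n => by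
    have := hstep n
    have := mul_nonneg (half_pos hη).le (hS0 n)
    linarith
  have hlim : Filter.Tendsto a Filter.atTop (nhds (⨅ n, a n)) :=
    tendsto_atTop_ciInf hanti ⟨b, by rintro _ ⟨n, rfl⟩; exact hb n⟩
  have hSlim : Filter.Tendsto S Filter.atTop (nhds 0) := by
    have hdiff : Filter.Tendsto (fun n => 2 / η * (a n - a (n + 1))) Filter.atTop (nhds 0) := by
      have := ((hlim.sub (hlim.comp (Filter.tendsto_add_atTop_nat 1))).const_mul (2 / η))
      simpa using this
    refine squeeze_zero hS0 (fun n => ?_) hdiff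
    have h1 := hstep n
    rw [div_mul_eq_mul_div, le_div_iff₀ hη]
    linarith
  have hres : ∀ x, Filter.Tendsto (fun n => res w μ p f c (Φ^[n] u) x) Filter.atTop (nhds 0) := by
    intro x
    have hsq : Filter.Tendsto (fun n => res w μ p f c (Φ^[n] u) x ^ 2) Filter.atTop (nhds 0) := by
      have hd : Filter.Tendsto (fun n => S n / μ x) Filter.atTop (nhds 0) := by
        simpa using hSlim.div_const (μ x)
      refine squeeze_zero (fun n => sq_nonneg _) (fun n => ?_) hd
      rw [le_div_iff₀ (hμ x), mul_comm]
      exact Finset.single_le_sum (f := fun x => μ x * res w μ p f c (Φ^[n] u) x ^ 2)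
        (fun x _ => mul_nonneg (hμ x).le (sq_nonneg _)) (Finset.mem_univ x)
    have h1 := hsq.sqrt
    simp only [Real.sqrt_sq_eq_abs, Real.sqrt_zero] at h1
    exact (tendsto_zero_iff_abs_tendsto_zero _).2 h1
  obtain ⟨ε, hε, hR⟩ := apriori hnonneg hsymm hμ hconn p f hf
  obtain ⟨R, hR⟩ := hR c
  have hev : ∀ᶠ n in Filter.atTop, Φ^[n] u ∈ Set.Icc (fun _ : V => -R) (fun _ => R) := by
    have h1 : ∀ᶠ n in Filter.atTop, ∀ x, |res w μ p f c (Φ^[n] u) x| ≤ ε := by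
      rw [Filter.eventually_all]
      intro x
      have h2 := ((tendsto_zero_iff_abs_tendsto_zero _).1 (hres x)).eventually_lt_const hε
      exact h2.mono fun n hn => hn.le
    refine h1.mono fun n hn => ?_
    have h3 := hR c hc le_rfl _ hn
    exact ⟨fun x => (abs_le.1 (h3 x)).1, fun x => (abs_le.1 (h3 x)).2⟩
  obtain ⟨z, _, k, hk, hz⟩ := isCompact_Icc.tendsto_subseq' hev.frequently
  refine ⟨z, k, hk, fun x => ?_, hz⟩
  have h1 : Filter.Tendsto (fun n => res w μ p f c (Φ^[k n] u) x) Filter.atTop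
      (nhds (res w μ p f c z x)) :=
    ((continuous_apply x).comp (res_continuous_right p f c)).continuousAt.tendsto.comp hz
  exact tendsto_nhds_unique h1 ((hres x).comp hk.tendsto_atTop)

/-- A strict supersolution `v` produces two solutions. The orbit of `v` accumulates at a solution
below `v`. Among the orbits of the translates `v + t`, the one at the threshold between those that
eventually drop below `v` and those that never do accumulates at a solution not below `v`. -/
theorem two_solutions [Nonempty V] (hnonneg : ∀ x y, 0 ≤ w x y) (hsymm : ∀ x y, w x y = w y x)
    (hμ : ∀ x, 0 < μ x)
    (hconn : (SimpleGraph.fromRel (fun x y => 0 < w x y)).Connected)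
    (p : ℕ) (f : V → ℝ) (hf : gint μ f < 0) {c : ℝ} (hc : 0 < c) (v : V → ℝ)
    (hv : ∀ x, res w μ p f c v x < 0) :
    ∃ y z : V → ℝ, y ≠ z ∧ (∀ x, res w μ p f c y x = 0) ∧ (∀ x, res w μ p f c z x = 0) := by
  obtain ⟨ψ, hψv, hψ⟩ := exists_sub hnonneg hsymm hμ hconn p f hf hc v
  obtain ⟨η, hη, hst⟩ : ∃ η : ℝ, 0 < η ∧ ∀ x, η * ((∑ y, w x y) / μ x + c) ≤ 1 / 2 := by
    obtain ⟨D, hD⟩ := (Set.finite_range fun x => (∑ y, w x y) / μ x + c).bddAbove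
    have hD' : ∀ x, (∑ y, w x y) / μ x + c ≤ D := fun x => hD ⟨x, rfl⟩
    have hD0 : 0 < D := by
      obtain ⟨x⟩ := ‹Nonempty V›
      have h1 : 0 ≤ ∑ y, w x y := Finset.sum_nonneg fun y _ => hnonneg x y
      have h2 := hμ x
      have h3 : 0 ≤ (∑ y, w x y) / μ x := by positivity
      linarith [hD' x]
    refine ⟨1 / (2 * D), by positivity, fun x => ?_⟩
    rw [div_mul_eq_mul_div, div_le_div_iff₀ (by positivity) (by positivity)]
    linarith [hD' x]
  set Φ := stepMap w μ p f c η with hΦ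
  have hmono : Monotone Φ := stepMap_monotone hnonneg p f hμ hc hη hst
  have hcont : Continuous Φ := stepMap_continuous p f c η
  have hΦv : ∀ x, Φ v x < v x := fun x => by
    have := mul_neg_of_pos_of_neg hη (hv x)
    show v x + η * res w μ p f c v x < v x
    linarith
  have hsubstep : ∀ u : V → ℝ, (∀ x, 0 ≤ res w μ p f c u x) → u ≤ Φ u := fun u hu x => by
    have := mul_nonneg hη.le (hu x)
    show u x ≤ u x + η * res w μ p f c u x
    linarith
  have hsubiter : ∀ u : V → ℝ, u ≤ Φ u → ∀ n, u ≤ Φ^[n] u := fun u hu n =>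
    hmono.monotone_iterate_of_le_map hu (Nat.zero_le n)
  have hψn : ∀ u, ψ ≤ u → ∀ n, ψ ≤ Φ^[n] u := fun u hu n =>
    (hsubiter ψ (hsubstep ψ hψ) n).trans (hmono.iterate n hu)
  obtain ⟨b, hb⟩ : ∃ b, ∀ u ∈ Set.Icc ψ v, b ≤ Jfun w μ p (-c) f u := by
    obtain ⟨b, hb⟩ := (isCompact_Icc (a := ψ) (b := v)).bddBelow_image
      (Jfun_continuous (w := w) (μ := μ) p f (-c)).continuousOn
    exact ⟨b, fun u hu => hb ⟨u, hu, rfl⟩⟩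
  have hJanti : ∀ u, Antitone fun n => Jfun w μ p (-c) f (Φ^[n] u) := fun u =>
    antitone_nat_of_succ_le fun n => by
      rw [Function.iterate_succ_apply']
      have h1 := descent hsymm hnonneg hμ p f hc hη hst (Φ^[n] u)
      have h2 : 0 ≤ ∑ x, μ x * res w μ p f c (Φ^[n] u) x ^ 2 :=
        Finset.sum_nonneg fun x _ => mul_nonneg (hμ x).le (sq_nonneg _)
      have h3 := mul_nonneg (half_pos hη).le h2
      linarith
  have hviter : ∀ n, Φ^[n] v ≤ v := fun n =>
    hmono.antitone_iterate_of_map_le (fun x => (hΦv x).le) (Nat.zero_le n)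
  -- An orbit starting above `ψ` and entering the box `[ψ, v]` stays there, so its energy is at
  -- least `b` at all times.
  have hJb : ∀ u, ψ ≤ u → ∀ n, Φ^[n] u ≤ v → ∀ k, b ≤ Jfun w μ p (-c) f (Φ^[k] u) := by
    intro u hu n hn k
    have h1 : Φ^[k + n] u ≤ v := by
      rw [Function.iterate_add_apply]
      exact (hmono.iterate k hn).trans (hviter k)
    exact (hb _ ⟨hψn u hu _, h1⟩).trans (hJanti u (Nat.le_add_right k n))
  obtain ⟨y, ky, -, hy, hylim⟩ := orbit_cluster hnonneg hsymm hμ hconn p f hf hc hη hst v b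
    (hJb v hψv 0 le_rfl)
  have hyv : y ≤ v := le_of_tendsto' hylim fun n => hviter _
  let W : ℝ → V → ℝ := fun t x => v x + t
  have hWcont : Continuous W := by fun_prop
  have hWmono : Monotone W := fun s t hst x => by show v x + s ≤ v x + t; linarith
  let B : Set ℝ := {t | ∃ n, Φ^[n] (W t) ≤ v}
  have hB0 : (0 : ℝ) ∈ B := ⟨0, fun x => by simp [W]⟩
  have hBlower : ∀ s t, s ≤ t → t ∈ B → s ∈ B := by
    rintro s t hst ⟨n, hn⟩
    exact ⟨n, (hmono.iterate n (hWmono hst)).trans hn⟩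
  have hBbdd : BddAbove B := by
    obtain ⟨T, hT⟩ := (Set.finite_range fun x =>
      max (1 - v x) ((f x - glap w μ v x) / c - v x)).bddAbove
    have hT' : ∀ x, max (1 - v x) ((f x - glap w μ v x) / c - v x) ≤ T := fun x => hT ⟨x, rfl⟩
    refine ⟨max T 1, fun t ht => ?_⟩
    by_contra! hlt
    have hsub : ∀ x, 0 ≤ res w μ p f c (W (max T 1)) x := by
      intro x
      have h1 := (le_max_left _ _).trans ((hT' x).trans (le_max_left T 1))
      have h2 := (le_max_right _ _).trans ((hT' x).trans (le_max_left T 1))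
      have h3 := gnl_ge_self p (show 1 ≤ v x + max T 1 by linarith)
      have h4 : f x - glap w μ v x ≤ (v x + max T 1) * c := by
        rw [← div_le_iff₀ hc]; linarith
      have h5 := mul_le_mul_of_nonneg_left h3 hc.le
      show 0 ≤ glap w μ (fun y => v y + max T 1) x + c * gnl p (v x + max T 1) - f x
      rw [glap_add_const]
      linarith
    obtain ⟨n, hn⟩ := hBlower _ _ hlt.le ht
    obtain ⟨x⟩ := ‹Nonempty V›
    have h1 : v x + max T 1 ≤ v x := (hsubiter _ (hsubstep _ hsub) n).trans hn x
    linarith [le_max_right T 1]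
  have hopen : IsOpen {u : V → ℝ | ∀ x, u x < v x} := by
    simp only [Set.ofPred_forall]
    exact isOpen_iInter_of_finite fun x => isOpen_lt (continuous_apply x) continuous_const
  -- Strictness of the supersolution makes `B` relatively open: one more step is strictly below `v`.
  have hBopen : ∀ t ∈ B, ∃ s > t, s ∈ B := by
    rintro t ⟨n, hn⟩
    have h1 : ∀ x, Φ^[n + 1] (W t) x < v x := fun x => by
      rw [Function.iterate_succ_apply']
      exact (hmono hn x).trans_lt (hΦv x)
    have h2 : Continuous fun s => Φ^[n + 1] (W s) := (hcont.iterate (n + 1)).comp hWcont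
    have h3 : ∀ᶠ s in nhdsWithin t (Set.Ioi t), ∀ x, Φ^[n + 1] (W s) x < v x :=
      Filter.Eventually.filter_mono nhdsWithin_le_nhds
        (h2.continuousAt.eventually (hopen.mem_nhds h1))
    obtain ⟨s, hs, hst⟩ := (h3.and self_mem_nhdsWithin).exists
    exact ⟨s, hst, n + 1, fun x => (hs x).le⟩
  set τ := sSup B with hτ
  have hτB : τ ∉ B := fun h => by
    obtain ⟨s, hs, hsB⟩ := hBopen τ h
    exact absurd (le_csSup hBbdd hsB) (not_le.2 hs)
  have hτ0 : 0 < τ := lt_of_le_of_ne (le_csSup hBbdd hB0) fun h => hτB (h ▸ hB0)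
  have hτJ : ∀ n, b ≤ Jfun w μ p (-c) f (Φ^[n] (W τ)) := by
    intro n
    have h1 : Continuous fun t => Jfun w μ p (-c) f (Φ^[n] (W t)) :=
      (Jfun_continuous p f (-c)).comp ((hcont.iterate n).comp hWcont)
    refine ge_of_tendsto (h1.continuousAt.tendsto.mono_left (nhdsWithin_le_nhds (s := Set.Iio τ))) ?_
    filter_upwards [Ioo_mem_nhdsLT hτ0] with t ht
    obtain ⟨s, hsB, hs⟩ := exists_lt_of_lt_csSup ⟨0, hB0⟩ ht.2
    obtain ⟨m, hm⟩ := hBlower t s hs.le hsB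
    refine hJb (W t) (fun x => (hψv x).trans ?_) m hm n
    show v x ≤ v x + t
    linarith [ht.1]
  obtain ⟨z, kz, -, hz, hzlim⟩ := orbit_cluster hnonneg hsymm hμ hconn p f hf hc hη hst (W τ) b hτJ
  refine ⟨y, z, fun hyz => hτB ?_, hy, hz⟩
  -- If `z ≤ v`, then `z = Φ z ≤ Φ v < v`, so the threshold orbit would enter `{u ≤ v}`.
  have hzv : ∀ x, z x < v x := fun x => by
    have h1 : Φ z x = z x := by
      show z x + η * res w μ p f c z x = z x
      rw [hz x]; ring
    rw [← h1]
    exact (hmono (hyz ▸ hyv) x).trans_lt (hΦv x)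
  obtain ⟨n, hn⟩ := (hzlim.eventually (hopen.mem_nhds hzv)).exists
  exact ⟨kz n, fun x => (hn x).le⟩

theorem res_eq_zero_iff (p : ℕ) (f : V → ℝ) (lam : ℝ) (u : V → ℝ) (x : V) :
    res w μ p f (-lam) u x = 0 ↔
      glap w μ u x = lam * Real.exp (u x) * (Real.exp (u x) - 1) ^ (2 * p + 1) + f x := by
  unfold res gnl
  constructor <;> intro h <;> linarith

/-- The set of solvable `c > 0` has a least element. -/
theorem exists_least [Nonempty V] (hnonneg : ∀ x y, 0 ≤ w x y) (hsymm : ∀ x y, w x y = w y x)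
    (hμ : ∀ x, 0 < μ x)
    (hconn : (SimpleGraph.fromRel (fun x y => 0 < w x y)).Connected)
    (p : ℕ) (f : V → ℝ) (hf : gint μ f < 0) :
    ∃ c, IsLeast {c : ℝ | 0 < c ∧ ∃ u : V → ℝ, ∀ x, res w μ p f c u x = 0} c := by
  have hvol := vol_pos hμ
  -- The constant `−log 2` is a strict supersolution as soon as `c` is large.
  obtain ⟨c1, hc1, u1, hu1⟩ : ∃ c1 : ℝ, 0 < c1 ∧ ∃ u : V → ℝ, ∀ x, res w μ p f c1 u x = 0 := by
    have hg : gnl p (-Real.log 2) < 0 := by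
      have e : Real.exp (-Real.log 2) = 1 / 2 := by
        rw [Real.exp_neg, Real.exp_log (by norm_num)]; norm_num
      unfold gnl
      rw [e]
      exact mul_neg_of_pos_of_neg (by norm_num) (Odd.pow_neg ⟨p, rfl⟩ (by norm_num))
    obtain ⟨F, hF⟩ := (Set.finite_range fun x => |f x|).bddAbove
    have hF' : ∀ x, |f x| ≤ F := fun x => hF ⟨x, rfl⟩
    have hF0 : 0 ≤ F := by
      obtain ⟨x⟩ := ‹Nonempty V›
      exact (abs_nonneg _).trans (hF' x)
    have hgn : 0 < -gnl p (-Real.log 2) := by linarith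
    have hcpos : 0 < (F + 1) / -gnl p (-Real.log 2) := by positivity
    refine ⟨(F + 1) / -gnl p (-Real.log 2), hcpos, ?_⟩
    obtain ⟨y, _, -, hy, -⟩ := two_solutions hnonneg hsymm hμ hconn p f hf hcpos
      (fun _ => -Real.log 2) (fun x => by
        have h1 : (F + 1) / -gnl p (-Real.log 2) * gnl p (-Real.log 2) = -(F + 1) := by
          have := hg.ne
          field_simp
        have h2 := (abs_le.1 (hF' x)).1
        have h3 : glap w μ (fun _ => -Real.log 2) x = 0 := by simp [glap]
        show glap w μ (fun _ => -Real.log 2) x + _ - f x < 0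
        rw [h3, h1]
        linarith)
    exact ⟨y, hy⟩
  have hlow : ∀ c : ℝ, 0 < c → (∃ u : V → ℝ, ∀ x, res w μ p f c u x = 0) →
      -gint μ f / ∑ x, μ x ≤ c := by
    rintro c hc ⟨u, hu⟩
    obtain ⟨x, hx⟩ := exists_gnl_le hsymm hμ p f hc (ε := 0) u (fun x => (hu x).le)
    rw [div_le_iff₀ hvol]
    have h1 := mul_le_mul_of_nonneg_right
      (mul_le_mul_of_nonneg_left (gnl_ge_neg_one p (u x)) hc.le) hvol.le
    linarith
  have hc0 : 0 < -gint μ f / ∑ x, μ x := div_pos (by linarith) hvol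
  set c0 := -gint μ f / ∑ x, μ x with hc0def
  obtain ⟨ε, hε, hR⟩ := apriori hnonneg hsymm hμ hconn p f hf
  obtain ⟨R, hR⟩ := hR c1
  let Z : Set (ℝ × (V → ℝ)) :=
    (Set.Icc c0 c1 ×ˢ Set.Icc (fun _ : V => -R) (fun _ => R)) ∩ {q | res w μ p f q.1 q.2 = 0}
  have hZ : IsCompact Z := (isCompact_Icc.prod isCompact_Icc).inter_right
    (isClosed_eq (res_continuous p f) continuous_const)
  have hmem : ∀ c : ℝ, 0 < c → c ≤ c1 → ∀ u : V → ℝ, (∀ x, res w μ p f c u x = 0) →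
      (c, u) ∈ Z := by
    intro c hc hcc u hu
    have h1 := hR c hc hcc u (fun x => by rw [hu x]; simpa using hε.le)
    exact ⟨⟨⟨hlow c hc ⟨u, hu⟩, hcc⟩,
      ⟨fun x => (abs_le.1 (h1 x)).1, fun x => (abs_le.1 (h1 x)).2⟩⟩, funext hu⟩
  obtain ⟨c, ⟨q, hq, rfl⟩, hmin⟩ := (hZ.image continuous_fst).exists_isLeast
    ⟨c1, _, hmem c1 hc1 le_rfl u1 hu1, rfl⟩
  refine ⟨q.1, ⟨hc0.trans_le hq.1.1.1, q.2, fun x => congrFun hq.2 x⟩, ?_⟩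
  rintro d ⟨hd, u, hu⟩
  rcases le_total d c1 with h | h
  · exact hmin ⟨_, hmem d hd h u hu, rfl⟩
  · exact hq.1.1.2.trans h

end Graph

theorem stmt_13 {V : Type*} [Fintype V] [Nonempty V]
    (w : V → V → ℝ) (μ : V → ℝ)
    (hsymm : ∀ x y, w x y = w y x) (hnonneg : ∀ x y, 0 ≤ w x y)
    (hμ : ∀ x, 0 < μ x)
    (hconn : (SimpleGraph.fromRel (fun x y => 0 < w x y)).Connected)
    (p : ℕ) (f : V → ℝ) (hf : gint μ f < 0) :
    ∃ Λstar : ℝ, Λstar < 0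
      ∧ (∀ lam : ℝ, lam < Λstar →
        ∃ u v : V → ℝ, u ≠ v
          ∧ (∀ x, glap w μ u x
              = lam * Real.exp (u x) * (Real.exp (u x) - 1) ^ (2 * p + 1) + f x)
          ∧ (∀ x, glap w μ v x
              = lam * Real.exp (v x) * (Real.exp (v x) - 1) ^ (2 * p + 1) + f x))
      ∧ (∀ lam : ℝ, Λstar < lam → lam < 0 →
          ¬ ∃ u : V → ℝ, ∀ x, glap w μ u x
              = lam * Real.exp (u x) * (Real.exp (u x) - 1) ^ (2 * p + 1) + f x)
      ∧ (∃ u : V → ℝ, ∀ x, glap w μ u x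
          = Λstar * Real.exp (u x) * (Real.exp (u x) - 1) ^ (2 * p + 1) + f x) := by
  obtain ⟨c, ⟨hc, u0, hu0⟩, hmin⟩ := exists_least hnonneg hsymm hμ hconn p f hf
  refine ⟨-c, by linarith, fun lam hlam => ?_, ?_, ?_⟩
  · have hd : 0 < -lam := by linarith
    -- With `s = log (-lam / c)`, the translate `u₀ - s` is a strict supersolution for `lam`.
    have hs : 0 < Real.log (-lam / c) := Real.log_pos (by rw [lt_div_iff₀ hc]; linarith)
    obtain ⟨y, z, hyz, hy, hz⟩ := two_solutions hnonneg hsymm hμ hconn p f hf hd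
      (fun x => u0 x + -Real.log (-lam / c)) (fun x => by
        have h1 := gnl_shift p (u0 x) hs
        rw [Real.exp_log (by positivity)] at h1
        have h2 := mul_lt_mul_of_pos_left h1 hc
        have h3 : c * (-lam / c * gnl p (u0 x - Real.log (-lam / c)))
            = -lam * gnl p (u0 x + -Real.log (-lam / c)) := by
          rw [← sub_eq_add_neg]; field_simp
        have h4 := hu0 x
        unfold res at h4 ⊢
        rw [glap_add_const]
        linarith)
    exact ⟨y, z, hyz, fun x => (res_eq_zero_iff p f lam y x).1 (hy x),
      fun x => (res_eq_zero_iff p f lam z x).1 (hz x)⟩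
  · rintro lam h1 h2 ⟨u, hu⟩
    have h3 : c ≤ -lam :=
      hmin ⟨by linarith, u, fun x => (res_eq_zero_iff p f lam u x).2 (hu x)⟩
    linarith
  · refine ⟨u0, fun x => (res_eq_zero_iff p f (-c) u0 x).1 ?_⟩
    rw [neg_neg]; exact hu0 x
end
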